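/- Let f and g : ℂ² → ℂ be polynomials such that x₀ is a root of multiplicity 1 of the one-variable polynomial f(x,0), and such that f − g = y^k · r(x,y) for some integer k ≥ 0 and a polynomial r with r(x₀,0) ≠ 0. Then the curves {f = 0} and {g = 0} are smooth near the point p = (x₀,0), and their local intersection number at p equals k (i.e. they have tangency of order k − 1 at p when k > 0, and they do not meet at p when k = 0). -/

import Mathlib

/-! **Statement 19** (Lemma `lintersatorb`): local intersection numbers of two plane
curves, following Esterov–Lang, "Bernstein–Kouchnirenko–Khovanskii with a symmetry". -/

noncomputable section

open MvPolynomial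

/-- Evaluation of a two-variable polynomial at `(x,y)`. -/
def ev2 (f : MvPolynomial (Fin 2) ℂ) (x y : ℂ) : ℂ := eval ![x, y] f

/-! By the implicit function theorem, near `p = (x₀, 0)` the curve `{f = 0}` is a graph `x = ψ y`.
On it `g = f - y ^ k * r` equals `-y ^ k * r (ψ y, y)`, whose last factor is a unit at `y = 0`; this
gives the intersection number. If `k = 0` then `g` does not vanish at `p`; otherwise `f` and `g`
agree on the line `y = 0`, so `∂g/∂x` and `∂f/∂x` are equal at `p`. -/

open Filter Topology

section PartialDerivative

variable {𝕜 E F : Type*} [NontriviallyNormedField 𝕜] [NormedAddCommGroup E] [NormedSpace 𝕜 E]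
  [NormedAddCommGroup F] [NormedSpace 𝕜 F]

theorem fderiv_apply_one_zero {f : 𝕜 × E → F} {x : 𝕜} {y : E}
    (hf : DifferentiableAt 𝕜 f (x, y)) :
    fderiv 𝕜 f (x, y) (1, 0) = deriv (fun t ↦ f (t, y)) x :=
  (hf.hasFDerivAt.comp_hasDerivAt x ((hasDerivAt_id x).prodMk (hasDerivAt_const x y))).deriv.symm

theorem fderiv_ne_zero_of_deriv_ne_zero {f : 𝕜 × E → F} {x : 𝕜} {y : E}
    (hf : DifferentiableAt 𝕜 f (x, y)) (hx : deriv (fun t ↦ f (t, y)) x ≠ 0) :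
    fderiv 𝕜 f (x, y) ≠ 0 := by
  rw [← fderiv_apply_one_zero hf] at hx
  exact fun h ↦ hx (by rw [h, zero_apply])

theorem eventually_fderiv_ne_zero_of_eq_zero [CompleteSpace F] {f : E → F} {p : E}
    (hf : AnalyticAt 𝕜 f p) (hp : f p = 0 → fderiv 𝕜 f p ≠ 0) :
    ∀ᶠ q in 𝓝 p, f q = 0 → fderiv 𝕜 f q ≠ 0 := by
  by_cases hzero : f p = 0
  · filter_upwards [hf.fderiv.continuousAt.eventually_ne (hp hzero)] with q hq _ using hq
  · filter_upwards [hf.continuousAt.eventually_ne hzero] with q hq h using absurd h hq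

end PartialDerivative

section ImplicitFunction

variable {𝕜 E₁ E₂ F : Type*} [NontriviallyNormedField 𝕜]
  [NormedAddCommGroup E₁] [NormedSpace 𝕜 E₁] [CompleteSpace E₁]
  [NormedAddCommGroup E₂] [NormedSpace 𝕜 E₂] [CompleteSpace E₂]
  [NormedAddCommGroup F] [NormedSpace 𝕜 F] [CompleteSpace F]

theorem analyticAt_implicitFunctionOfProdDomain {f : E₁ × E₂ → F} {u : E₁ × E₂}
    {f' : E₁ × E₂ →L[𝕜] F} (hf : AnalyticAt 𝕜 f u) (hf' : HasStrictFDerivAt f f' u)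
    (hinv : (f' ∘L .inr 𝕜 E₁ E₂).IsInvertible) :
    AnalyticAt 𝕜 (hf'.implicitFunctionOfProdDomain hinv) u.1 := by
  let φ := hf'.implicitFunctionDataOfProdDomain hinv
  have hprod : AnalyticAt 𝕜 φ.prodFun u := hf.prod analyticAt_fst
  have hsymm : AnalyticAt 𝕜 φ.toOpenPartialHomeomorph.symm (f u, u.1) :=
    φ.toOpenPartialHomeomorph.analyticAt_symm' φ.pt_mem_toOpenPartialHomeomorph_source hprod
      φ.hasStrictFDerivAt.hasFDerivAt.fderiv
  have hline : AnalyticAt 𝕜 (fun x : E₁ ↦ (f u, x)) u.1 := analyticAt_const.prod analyticAt_id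
  exact analyticAt_snd.comp (hsymm.comp hline)

theorem exists_analyticAt_eventually_eq_zero_iff [CompleteSpace 𝕜] {f : 𝕜 × E₁ → 𝕜} {x₀ : 𝕜}
    {y₀ : E₁} (hf : AnalyticAt 𝕜 f (x₀, y₀)) (hroot : f (x₀, y₀) = 0)
    (hsimple : deriv (fun x ↦ f (x, y₀)) x₀ ≠ 0) :
    ∃ ψ : E₁ → 𝕜, AnalyticAt 𝕜 ψ y₀ ∧ ψ y₀ = x₀ ∧
      ∀ᶠ q in 𝓝 (x₀, y₀), (f q = 0 ↔ q.1 = ψ q.2) := by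
  -- Mathlib's implicit function solves for the second coordinate.
  have hswap : AnalyticAt 𝕜 (fun v : E₁ × 𝕜 ↦ f v.swap) (y₀, x₀) :=
    hf.comp_of_eq (analyticAt_snd.prod analyticAt_fst) rfl
  have hstrict := hswap.hasStrictFDerivAt
  have hpartial : fderiv 𝕜 (fun v : E₁ × 𝕜 ↦ f v.swap) (y₀, x₀) (0, 1) =
      deriv (fun x ↦ f (x, y₀)) x₀ :=
    (hstrict.hasFDerivAt.comp_hasDerivAt x₀
      ((hasDerivAt_const x₀ y₀).prodMk (hasDerivAt_id x₀))).deriv.symm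
  have hinv : (fderiv 𝕜 (fun v : E₁ × 𝕜 ↦ f v.swap) (y₀, x₀) ∘L .inr 𝕜 E₁ 𝕜).IsInvertible :=
    ⟨ContinuousLinearEquiv.unitsEquivAut 𝕜 (Units.mk0 _ hsimple), by ext; simp [hpartial]⟩
  have hzero := hstrict.eventually_apply_eq_iff_implicitFunctionOfProdDomain hinv
  simp only [Prod.swap_prod_mk, hroot] at hzero
  refine ⟨hstrict.implicitFunctionOfProdDomain hinv,
    analyticAt_implicitFunctionOfProdDomain hswap hstrict hinv, hzero.self_of_nhds.1 hroot, ?_⟩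
  filter_upwards [continuous_swap.continuousAt.eventually hzero] with q hq
  exact hq.trans eq_comm

end ImplicitFunction

section AnalyticGerms

variable {𝕜 : Type*} [NontriviallyNormedField 𝕜]

theorem deriv_eq_of_sub_eq_snd_pow_mul {f g r : 𝕜 × 𝕜 → 𝕜} {k : ℕ} {x₀ : 𝕜} (hk : k ≠ 0)
    (hfg : ∀ᶠ q in 𝓝 (x₀, 0), f q - g q = q.2 ^ k * r q) :
    deriv (fun x ↦ g (x, 0)) x₀ = deriv (fun x ↦ f (x, 0)) x₀ := by
  have hline : ContinuousAt (fun x : 𝕜 ↦ (x, (0 : 𝕜))) x₀ := by fun_prop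
  refine EventuallyEq.deriv_eq ?_
  filter_upwards [hline.eventually hfg] with x hx
  rw [zero_pow hk, zero_mul, sub_eq_zero] at hx
  exact hx.symm

theorem eq_zero_imp_fderiv_ne_zero_of_sub_eq_snd_pow_mul {f g r : 𝕜 × 𝕜 → 𝕜} {k : ℕ} {x₀ : 𝕜}
    (hg : DifferentiableAt 𝕜 g (x₀, 0)) (hroot : f (x₀, 0) = 0)
    (hsimple : deriv (fun x ↦ f (x, 0)) x₀ ≠ 0)
    (hfg : ∀ᶠ q in 𝓝 (x₀, 0), f q - g q = q.2 ^ k * r q) (hr : r (x₀, 0) ≠ 0) :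
    g (x₀, 0) = 0 → fderiv 𝕜 g (x₀, 0) ≠ 0 := by
  intro hgroot
  have hk : k ≠ 0 := by
    rintro rfl
    have hp := hfg.self_of_nhds
    rw [hroot, hgroot, sub_zero, pow_zero, one_mul] at hp
    exact hr hp.symm
  exact fderiv_ne_zero_of_deriv_ne_zero hg (by rwa [deriv_eq_of_sub_eq_snd_pow_mul hk hfg])

theorem statement19_general [CompleteSpace 𝕜] {f g r : 𝕜 × 𝕜 → 𝕜} {k : ℕ} {x₀ : 𝕜}
    (hf : AnalyticAt 𝕜 f (x₀, 0)) (hr : AnalyticAt 𝕜 r (x₀, 0))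
    (hroot : f (x₀, 0) = 0) (hsimple : deriv (fun x ↦ f (x, 0)) x₀ ≠ 0)
    (hfg : ∀ᶠ q in 𝓝 (x₀, 0), f q - g q = q.2 ^ k * r q) (hr₀ : r (x₀, 0) ≠ 0) :
    (∀ᶠ q in 𝓝 (x₀, 0), f q = 0 → fderiv 𝕜 f q ≠ 0) ∧
    (∀ᶠ q in 𝓝 (x₀, 0), g q = 0 → fderiv 𝕜 g q ≠ 0) ∧
    ∃ ψ : 𝕜 → 𝕜, AnalyticAt 𝕜 ψ 0 ∧ ψ 0 = x₀ ∧
      (∀ᶠ y in 𝓝 0, f (ψ y, y) = 0) ∧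
      (∀ᶠ q in 𝓝 (x₀, 0), (f q = 0 ↔ q.1 = ψ q.2)) ∧
      ∃ h : 𝕜 → 𝕜, AnalyticAt 𝕜 h 0 ∧ h 0 ≠ 0 ∧ ∀ᶠ y in 𝓝 0, g (ψ y, y) = y ^ k * h y := by
  have hg : AnalyticAt 𝕜 g (x₀, 0) :=
    (hf.sub ((analyticAt_snd.pow k).mul hr)).congr <|
      hfg.mono fun _ hq ↦ sub_eq_iff_eq_add.2 (sub_eq_iff_eq_add'.1 hq)
  have hfsmooth : ∀ᶠ q in 𝓝 (x₀, 0), f q = 0 → fderiv 𝕜 f q ≠ 0 :=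
    eventually_fderiv_ne_zero_of_eq_zero hf fun _ ↦
      fderiv_ne_zero_of_deriv_ne_zero hf.differentiableAt hsimple
  have hgsmooth : ∀ᶠ q in 𝓝 (x₀, 0), g q = 0 → fderiv 𝕜 g q ≠ 0 :=
    eventually_fderiv_ne_zero_of_eq_zero hg <|
      eq_zero_imp_fderiv_ne_zero_of_sub_eq_snd_pow_mul hg.differentiableAt hroot hsimple hfg hr₀
  obtain ⟨ψ, hψ, hψ₀, hzero⟩ := exists_analyticAt_eventually_eq_zero_iff hf hroot hsimple
  have hgraph : AnalyticAt 𝕜 (fun y ↦ (ψ y, y)) 0 := hψ.prod analyticAt_id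
  have hgraph_tendsto : Tendsto (fun y ↦ (ψ y, y)) (𝓝 0) (𝓝 (x₀, 0)) := by
    simpa only [hψ₀] using hgraph.continuousAt.tendsto
  have hfψ : ∀ᶠ y in 𝓝 0, f (ψ y, y) = 0 :=
    (hgraph_tendsto.eventually hzero).mono fun _ hy ↦ hy.2 rfl
  have hrgraph : AnalyticAt 𝕜 (fun y ↦ r (ψ y, y)) 0 := hr.comp_of_eq hgraph (by rw [hψ₀])
  have hrgraph₀ : r (ψ 0, 0) ≠ 0 := by rwa [hψ₀]
  refine ⟨hfsmooth, hgsmooth, ψ, hψ, hψ₀, hfψ, hzero, fun y ↦ -r (ψ y, y), hrgraph.neg,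
    neg_ne_zero.2 hrgraph₀, ?_⟩
  filter_upwards [hfψ, hgraph_tendsto.eventually hfg] with y hfy hy
  linear_combination hfy - hy

end AnalyticGerms

section Polynomials

theorem hasFDerivAt_eval_mvPolynomial {𝕜 σ : Type*} [NontriviallyNormedField 𝕜] [Fintype σ]
    (p : MvPolynomial σ 𝕜) (x : σ → 𝕜) :
    HasFDerivAt (fun z ↦ eval z p)
      (∑ i, eval x (pderiv i p) • (ContinuousLinearMap.proj i : (σ → 𝕜) →L[𝕜] 𝕜)) x := by
  classical
  induction p using MvPolynomial.induction_on with
  | C a =>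
    simp only [eval_C]
    convert! hasFDerivAt_const (𝕜 := 𝕜) a x using 1
    ext v
    simp
  | add p q hp hq =>
    simp only [map_add]
    convert! hp.fun_add hq using 1
    ext v
    simp [add_mul, Finset.sum_add_distrib]
  | mul_X p j hp =>
    simp only [map_mul, eval_X]
    convert! hp.mul (hasFDerivAt_apply j x) using 1
    ext v
    simp [pderiv_X, Pi.single_apply, add_mul, Finset.sum_add_distrib, Finset.mul_sum, mul_assoc,
      apply_ite]

theorem hasFDerivAt_ev2 (f : MvPolynomial (Fin 2) ℂ) (q : ℂ × ℂ) :
    HasFDerivAt (fun v : ℂ × ℂ ↦ ev2 f v.1 v.2)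
      (ev2 (pderiv 0 f) q.1 q.2 • ContinuousLinearMap.fst ℂ ℂ ℂ +
        ev2 (pderiv 1 f) q.1 q.2 • ContinuousLinearMap.snd ℂ ℂ ℂ) q := by
  convert! (hasFDerivAt_eval_mvPolynomial f ![q.1, q.2]).comp q
    (ContinuousLinearEquiv.finTwoArrow ℂ ℂ).symm.hasFDerivAt using 1
  ext <;> simp [ev2, Fin.sum_univ_two]

theorem deriv_ev2 (f : MvPolynomial (Fin 2) ℂ) (x y : ℂ) :
    deriv (fun t ↦ ev2 f t y) x = ev2 (pderiv 0 f) x y := by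
  rw [← fderiv_apply_one_zero (hasFDerivAt_ev2 f (x, y)).differentiableAt,
    (hasFDerivAt_ev2 f (x, y)).fderiv]
  simp

theorem analyticAt_ev2 (f : MvPolynomial (Fin 2) ℂ) (q : ℂ × ℂ) :
    AnalyticAt ℂ (fun v : ℂ × ℂ ↦ ev2 f v.1 v.2) q :=
  (AnalyticOnNhd.eval_mvPolynomial f ![q.1, q.2] trivial).comp_of_eq
    ((ContinuousLinearEquiv.finTwoArrow ℂ ℂ).symm.analyticAt q) rfl

theorem pderiv_ne_zero_of_fderiv_ev2_ne_zero {f : MvPolynomial (Fin 2) ℂ} {q : ℂ × ℂ}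
    (hq : fderiv ℂ (fun v : ℂ × ℂ ↦ ev2 f v.1 v.2) q ≠ 0) :
    ev2 (pderiv 0 f) q.1 q.2 ≠ 0 ∨ ev2 (pderiv 1 f) q.1 q.2 ≠ 0 := by
  contrapose! hq
  rw [(hasFDerivAt_ev2 f q).fderiv, hq.1, hq.2]
  ext <;> simp

theorem exists_isOpen_pderiv_ne_zero {f : MvPolynomial (Fin 2) ℂ} {p : ℂ × ℂ}
    (hp : ∀ᶠ q in 𝓝 p, ev2 f q.1 q.2 = 0 → fderiv ℂ (fun v : ℂ × ℂ ↦ ev2 f v.1 v.2) q ≠ 0) :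
    ∃ U : Set (ℂ × ℂ), IsOpen U ∧ p ∈ U ∧ ∀ q ∈ U, ev2 f q.1 q.2 = 0 →
      (ev2 (pderiv 0 f) q.1 q.2 ≠ 0 ∨ ev2 (pderiv 1 f) q.1 q.2 ≠ 0) := by
  obtain ⟨U, hU, hUopen, hpU⟩ := eventually_nhds_iff.1 hp
  exact ⟨U, hUopen, hpU, fun q hq hfq ↦ pderiv_ne_zero_of_fderiv_ev2_ne_zero (hU q hq hfq)⟩

theorem ev2_sub_ev2_eq_pow_mul {f g r : MvPolynomial (Fin 2) ℂ} {k : ℕ}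
    (hfg : f - g = X 1 ^ k * r) (x y : ℂ) : ev2 f x y - ev2 g x y = y ^ k * ev2 r x y := by
  simpa [ev2] using congrArg (eval ![x, y]) hfg

end Polynomials

/-- Lemma `lintersatorb`. Let `f, g : ℂ² → ℂ` be polynomials such
that `x₀` is a root of multiplicity `1` of the one-variable polynomial `f(x,0)` (i.e.
`f(x₀,0) = 0` and `∂f/∂x(x₀,0) ≠ 0`), and such that `f - g = y^k · r(x,y)` for some
`k ≥ 0` and a polynomial `r` with `r(x₀,0) ≠ 0`. Then the curves `{f = 0}` and `{g = 0}`
are smooth near `p = (x₀,0)`, and their local intersection number at `p` equals `k`: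
near `p` the curve `{f = 0}` is the graph `x = ψ(y)` of an analytic function `ψ`, and the
restriction `g(ψ(y), y)` of `g` to it vanishes at `y = 0` to order exactly `k` (tangency
of order `k - 1` for `k > 0`, and no intersection for `k = 0`). -/
theorem statement19 (f g r : MvPolynomial (Fin 2) ℂ) (k : ℕ) (x₀ : ℂ)
    (hroot : ev2 f x₀ 0 = 0) (hsimple : ev2 (pderiv 0 f) x₀ 0 ≠ 0)
    (hfg : f - g = (X 1) ^ k * r) (hr : ev2 r x₀ 0 ≠ 0) :
    -- `{f = 0}` is smooth near `p`
    (∃ U : Set (ℂ × ℂ), IsOpen U ∧ (x₀, 0) ∈ U ∧ ∀ q ∈ U, ev2 f q.1 q.2 = 0 →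
        (ev2 (pderiv 0 f) q.1 q.2 ≠ 0 ∨ ev2 (pderiv 1 f) q.1 q.2 ≠ 0)) ∧
    -- `{g = 0}` is smooth near `p`
    (∃ U : Set (ℂ × ℂ), IsOpen U ∧ (x₀, 0) ∈ U ∧ ∀ q ∈ U, ev2 g q.1 q.2 = 0 →
        (ev2 (pderiv 0 g) q.1 q.2 ≠ 0 ∨ ev2 (pderiv 1 g) q.1 q.2 ≠ 0)) ∧
    -- the local intersection number of `{f = 0}` and `{g = 0}` at `p` equals `k`
    (∃ ψ : ℂ → ℂ, AnalyticAt ℂ ψ 0 ∧ ψ 0 = x₀ ∧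
      (∀ᶠ y in nhds (0 : ℂ), ev2 f (ψ y) y = 0) ∧
      (∀ᶠ q : ℂ × ℂ in nhds ((x₀, 0) : ℂ × ℂ), (ev2 f q.1 q.2 = 0 ↔ q.1 = ψ q.2)) ∧
      ∃ h : ℂ → ℂ, AnalyticAt ℂ h 0 ∧ h 0 ≠ 0 ∧
        (∀ᶠ y in nhds (0 : ℂ), ev2 g (ψ y) y = y ^ k * h y)) := by
  obtain ⟨hf, hg, hψ⟩ := statement19_general (analyticAt_ev2 f _) (analyticAt_ev2 r _)
    hroot (by rwa [deriv_ev2])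
    (.of_forall fun q ↦ ev2_sub_ev2_eq_pow_mul hfg q.1 q.2) hr
  exact ⟨exists_isOpen_pderiv_ne_zero hf, exists_isOpen_pderiv_ne_zero hg, hψ⟩

end
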